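/- Let Ω := B(0,1) ∪ {X ∈ ℝ² : |X| > 2} ⊆ ℝ² (the interior of the complement of the closed annulus closure(B(0,2)) ∖ B(0,1)). Then: (i) ∂Ω is 1-Ahlfors–David regular; (ii) there exists D₀ ≥ 1 such that both Ω and int(ℝ² ∖ Ω) satisfy the local (D₀, 1/2)-John condition; but (iii) Ω does not satisfy the Harnack chain condition (Ω is not even connected), so Ω is not a chord-arc domain. -/

import Mathlib

open Set Metric MeasureTheory
open scoped ENNReal NNReal

noncomputable section

/-- Euclidean space `ℝ^m`. -/
abbrev Euc (m : ℕ) : Type := EuclideanSpace ℝ (Fin m)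

variable {m : ℕ}

/-- `E ⊆ ℝ^m` is `d`-Ahlfors–David regular: `E` is closed and there is `D ≥ 1` with
`D⁻¹ rᵈ ≤ ℋᵈ(B(x,r) ∩ E) ≤ D rᵈ` for all `x ∈ E` and `0 < r < diam E`. -/
def IsADR (d : ℝ) (E : Set (Euc m)) : Prop :=
  IsClosed E ∧ ∃ D : ℝ, 1 ≤ D ∧ ∀ x ∈ E, ∀ r : ℝ, 0 < r →
    ENNReal.ofReal r < EMetric.diam E →
      ENNReal.ofReal (r ^ d / D) ≤ μH[d] (ball x r ∩ E) ∧
        μH[d] (ball x r ∩ E) ≤ ENNReal.ofReal (D * r ^ d)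

/-- The corkscrew condition for `Ω` with constant `c ∈ (0,1)`: for every `x ∈ ∂Ω` and
`0 < r < diam ∂Ω` there is `X ∈ Ω` with `B(X, c·r) ⊆ B(x,r) ∩ Ω`. -/
def CorkscrewWith (Ω : Set (Euc m)) (c : ℝ) : Prop :=
  ∀ x ∈ frontier Ω, ∀ r : ℝ, 0 < r → ENNReal.ofReal r < EMetric.diam (frontier Ω) →
    ∃ X ∈ Ω, ball X (c * r) ⊆ ball x r ∩ Ω

/-- The corkscrew condition (for some constant `c ∈ (0,1)`). -/
def Corkscrew (Ω : Set (Euc m)) : Prop := ∃ c : ℝ, 0 < c ∧ c < 1 ∧ CorkscrewWith Ω c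

/-- The 2-sided corkscrew condition: both `Ω` and `int (Ωᶜ)` satisfy the corkscrew condition. -/
def TwoSidedCorkscrew (Ω : Set (Euc m)) : Prop :=
  Corkscrew Ω ∧ Corkscrew (interior Ωᶜ)

/-- The distance between two sets. -/
def distSet (s t : Set (Euc m)) : ℝ := sInf {d : ℝ | ∃ x ∈ s, ∃ y ∈ t, d = dist x y}

/-- A path in `Ω`: a continuous map `γ : [0,1] → closure Ω` with `γ(t) ∈ Ω` for `t ∈ (0,1]`. -/
def IsPathIn (Ω : Set (Euc m)) (γ : ℝ → Euc m) : Prop :=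
  ContinuousOn γ (Icc 0 1) ∧ (∀ t ∈ Icc (0:ℝ) 1, γ t ∈ closure Ω) ∧
    ∀ t ∈ Ioc (0:ℝ) 1, γ t ∈ Ω

/-- The length (total variation) of a path `γ : [0,1] → ℝ^m`. -/
def pathLen (γ : ℝ → Euc m) : ℝ≥0∞ := eVariationOn γ (Icc 0 1)

/-- A `D`-non-tangential path in `Ω`: a path in `Ω` such that for every `t ∈ [0,1]` the length of
`γ` restricted to `[0,t]` is at most `D · dist(γ t, ∂Ω)`. -/
def IsNTPath (Ω : Set (Euc m)) (D : ℝ) (γ : ℝ → Euc m) : Prop :=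
  IsPathIn Ω γ ∧ ∀ t ∈ Icc (0:ℝ) 1,
    eVariationOn γ (Icc 0 t) ≤ ENNReal.ofReal (D * infDist (γ t) (frontier Ω))

/-- The `D₀`-John condition: there is `X₀ ∈ Ω` such that every `Y ∈ Ω` can be joined to `X₀` by a
`D₀`-non-tangential path in `Ω` from `Y` to `X₀`. -/
def JohnWith (Ω : Set (Euc m)) (D₀ : ℝ) : Prop :=
  ∃ X₀ ∈ Ω, ∀ Y ∈ Ω, ∃ γ : ℝ → Euc m, IsNTPath Ω D₀ γ ∧ γ 0 = Y ∧ γ 1 = X₀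

/-- The local `(D₀, R₀)`-John condition: for every `x ∈ ∂Ω` and `0 < r < R₀` there is a local John
point `Y ∈ B(x,r) ∩ Ω` with `B(Y, r/D₀) ⊆ Ω` such that every `z ∈ B(x,r) ∩ ∂Ω` can be joined to
`Y` by a `D₀`-non-tangential path in `Ω` of length at most `D₀ r`. -/
def LocalJohnWithin (Ω : Set (Euc m)) (D₀ R₀ : ℝ) : Prop :=
  ∀ x ∈ frontier Ω, ∀ r : ℝ, 0 < r → r < R₀ →
    ∃ Y ∈ ball x r ∩ Ω, ball Y (r / D₀) ⊆ Ω ∧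
      ∀ z ∈ ball x r ∩ frontier Ω, ∃ γ : ℝ → Euc m,
        IsNTPath Ω D₀ γ ∧ γ 0 = z ∧ γ 1 = Y ∧ pathLen γ ≤ ENNReal.ofReal (D₀ * r)

/-- The local `D₀`-John condition (i.e. the local `(D₀, diam ∂Ω)`-John condition). -/
def LocalJohnWith (Ω : Set (Euc m)) (D₀ : ℝ) : Prop :=
  ∀ x ∈ frontier Ω, ∀ r : ℝ, 0 < r → ENNReal.ofReal r < EMetric.diam (frontier Ω) →
    ∃ Y ∈ ball x r ∩ Ω, ball Y (r / D₀) ⊆ Ω ∧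
      ∀ z ∈ ball x r ∩ frontier Ω, ∃ γ : ℝ → Euc m,
        IsNTPath Ω D₀ γ ∧ γ 0 = z ∧ γ 1 = Y ∧ pathLen γ ≤ ENNReal.ofReal (D₀ * r)

/-- The weak local `D₀`-John condition, with surface measure `ℋᵈ` on `∂Ω`. -/
def WeakLocalJohnWith (d : ℝ) (Ω : Set (Euc m)) (D₀ : ℝ) : Prop :=
  ∃ θ : ℝ, 0 < θ ∧ θ ≤ 1 ∧ ∃ R : ℝ, 2 ≤ R ∧ ∀ X ∈ Ω,
    ∃ F : Set (Euc m), MeasurableSet F ∧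
      F ⊆ ball X (R * infDist X (frontier Ω)) ∩ frontier Ω ∧
      ENNReal.ofReal θ * μH[d] (ball X (R * infDist X (frontier Ω)) ∩ frontier Ω) ≤ μH[d] F ∧
      ∀ z ∈ F, ∃ γ : ℝ → Euc m, IsNTPath Ω D₀ γ ∧ γ 0 = z ∧ γ 1 = X ∧
        pathLen γ ≤ ENNReal.ofReal (D₀ * (R * infDist X (frontier Ω)))

/-- The Harnack chain condition: there are `C ≥ 1` and `M : ℝ → ℕ` such that any `X, X' ∈ Ω` with
`δ(X), δ(X') ≥ ρ` and `|X - X'| < Λ ρ` can be joined by a chain of at most `M Λ` open balls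
contained in `Ω`, consecutive balls intersecting, with `C⁻¹ diam Bₖ ≤ dist(Bₖ, ∂Ω) ≤ C diam Bₖ`. -/
def HarnackChain (Ω : Set (Euc m)) : Prop :=
  ∃ C : ℝ, 1 ≤ C ∧ ∃ M : ℝ → ℕ,
    ∀ ρ : ℝ, 0 < ρ → ∀ Λ : ℝ, 1 ≤ Λ → ∀ X ∈ Ω, ∀ X' ∈ Ω,
      ρ ≤ infDist X (frontier Ω) → ρ ≤ infDist X' (frontier Ω) → dist X X' < Λ * ρ →
      ∃ N : ℕ, 1 ≤ N ∧ N ≤ M Λ ∧ ∃ ctr : ℕ → Euc m, ∃ rad : ℕ → ℝ,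
        X ∈ ball (ctr 0) (rad 0) ∧ X' ∈ ball (ctr (N - 1)) (rad (N - 1)) ∧
        (∀ k < N, ball (ctr k) (rad k) ⊆ Ω) ∧
        (∀ k, k + 1 < N → (ball (ctr k) (rad k) ∩ ball (ctr (k + 1)) (rad (k + 1))).Nonempty) ∧
        (∀ k < N,
          C⁻¹ * Metric.diam (ball (ctr k) (rad k))
              ≤ distSet (ball (ctr k) (rad k)) (frontier Ω) ∧
            distSet (ball (ctr k) (rad k)) (frontier Ω)
              ≤ C * Metric.diam (ball (ctr k) (rad k)))

/-- A domain (connected open set) is NTA if it satisfies the Harnack chain condition and the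
2-sided corkscrew condition. -/
def IsNTA (Θ : Set (Euc m)) : Prop :=
  IsOpen Θ ∧ IsConnected Θ ∧ HarnackChain Θ ∧ TwoSidedCorkscrew Θ

/-- `Ω` is a chord-arc domain: NTA with `d`-ADR boundary. -/
def IsCAD (d : ℝ) (Ω : Set (Euc m)) : Prop := IsNTA Ω ∧ IsADR d (frontier Ω)

/-- `Ω` is a 2-sided chord-arc domain: a chord-arc domain such that `int (Ωᶜ)` is NTA. -/
def IsTwoSidedCAD (d : ℝ) (Ω : Set (Euc m)) : Prop := IsCAD d Ω ∧ IsNTA (interior Ωᶜ)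

/-- `E`, with the Euclidean metric, is quasiconvex: any two points of `E` can be joined by a path
in `E` of length at most `C` times their distance. -/
def QuasiconvexSet (E : Set (Euc m)) : Prop :=
  ∃ C : ℝ, 1 ≤ C ∧ ∀ x ∈ E, ∀ y ∈ E, ∃ γ : ℝ → Euc m,
    ContinuousOn γ (Icc 0 1) ∧ (∀ t ∈ Icc (0:ℝ) 1, γ t ∈ E) ∧ γ 0 = x ∧ γ 1 = y ∧
      eVariationOn γ (Icc 0 1) ≤ ENNReal.ofReal (C * dist x y)

/-- `E`, with the Euclidean metric, is annularly quasiconvex. -/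
def AnnularlyQuasiconvexSet (E : Set (Euc m)) : Prop :=
  ∃ C : ℝ, 1 ≤ C ∧ ∀ z ∈ E, ∀ r : ℝ, 0 < r →
    ENNReal.ofReal (C * r) < EMetric.diam E →
    ∀ x ∈ E ∩ (ball z (2 * r) \ ball z r), ∀ y ∈ E ∩ (ball z (2 * r) \ ball z r),
      ∃ γ : ℝ → Euc m, ContinuousOn γ (Icc 0 1) ∧
        (∀ t ∈ Icc (0:ℝ) 1, γ t ∈ E ∩ (ball z (C * r) \ ball z (r / C))) ∧
        γ 0 = x ∧ γ 1 = y ∧ eVariationOn γ (Icc 0 1) ≤ ENNReal.ofReal (C * dist x y)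

/-- `ρ` is an upper gradient of `f` on `E`: for every `1`-Lipschitz curve `γ : [0,L] → E` we have
`|f(γ 0) - f(γ L)| ≤ ∫₀ᴸ ρ(γ t) dt`. -/
def IsUpperGradientOn (f : Euc m → ℝ) (ρ : Euc m → ℝ≥0∞) (E : Set (Euc m)) : Prop :=
  ∀ L : ℝ, 0 ≤ L → ∀ γ : ℝ → Euc m, LipschitzOnWith 1 γ (Icc 0 L) →
    (∀ t ∈ Icc (0:ℝ) L, γ t ∈ E) →
    ENNReal.ofReal |f (γ 0) - f (γ L)| ≤ ∫⁻ t in Icc (0:ℝ) L, ρ (γ t)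

/-- `ϱ` is admissible for the pair `(E,F)` in `S`: `∫_γ ϱ ds ≥ 1` for every rectifiable
(`1`-Lipschitz parametrized) path in `S` connecting `E` and `F`. -/
def AdmissibleFor (S E F : Set (Euc m)) (ϱ : Euc m → ℝ≥0∞) : Prop :=
  ∀ L : ℝ, 0 < L → ∀ γ : ℝ → Euc m, LipschitzOnWith 1 γ (Icc 0 L) →
    (∀ t ∈ Icc (0:ℝ) L, γ t ∈ S) → γ 0 ∈ E → γ L ∈ F →
    1 ≤ ∫⁻ t in Icc (0:ℝ) L, ϱ (γ t)

/-- The `d`-modulus of the family of paths in `S` connecting `E` and `F`, w.r.t. measure `σ`. -/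
def modOn (σ : Measure (Euc m)) (S E F : Set (Euc m)) (d : ℝ) : ℝ≥0∞ :=
  sInf {v : ℝ≥0∞ | ∃ ϱ : Euc m → ℝ≥0∞, Measurable ϱ ∧ AdmissibleFor S E F ϱ ∧
    v = ∫⁻ x, ϱ x ^ d ∂σ}

/-- `L` is an affine hyperplane (affine subspace of codimension 1) of `ℝ^m`. -/
def IsAffineHyperplane (L : Set (Euc m)) : Prop :=
  ∃ A : AffineSubspace ℝ (Euc m), (A : Set (Euc m)) = L ∧
    Module.finrank ℝ A.direction + 1 = m

/-- The bilateral β-number `bβ_{∂Ω}(B(x,r), L)`. -/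
def bBeta (Ω : Set (Euc m)) (x : Euc m) (r : ℝ) (L : Set (Euc m)) : ℝ :=
  sSup ((fun y => infDist y L / r) '' (ball x r ∩ frontier Ω)) +
    sSup ((fun Y => infDist Y (frontier Ω) / r) '' (L ∩ ball x r))

/-- The open `c`-neighborhood `U_c(L)` of `L`. -/
def tubeNbhd (L : Set (Euc m)) (c : ℝ) : Set (Euc m) := {Y | infDist Y L < c}

/-- The interior of the complement of the closed annulus `closure B(0,2) ∖ B(0,1)` in `ℝ²`. -/
def pinched : Set (Euc 2) := ball (0 : Euc 2) 1 ∪ {X : Euc 2 | 2 < ‖X‖}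

open AffineMap (lineMap)
open scoped Real RealInnerProductSpace

/-!
The boundary consists of two concentric circles. It carries enough length because the distance to a
point of a connected set is a `1`-Lipschitz function on that set, so its image is an interval, and
not too much because a piece of a circle of diameter `s` lies on an arc of length at most `π * s`.

Below the scale of the gap, a boundary ball meets only one circle. On either side of that circle, a
John point for `B(x, r)` is `x` shifted radially by `r / 2`, and a ball of radius `r / 8` around it
is seen from every boundary point of `B(x, r)`: on the inner side by convexity, on the outer side
because the ball lies beyond every tangent line at such a point. The cone over this ball makes
straight segments to the John point non-tangential.

A Harnack chain is a connected subset of `Ω`, so an open set with the Harnack chain condition is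
connected, whereas the two circles separate the ball from the exterior.
-/

lemma frontier_union_of_disjoint_closure {X : Type*} [TopologicalSpace X] {s t : Set X}
    (h : Disjoint (closure s) (closure t)) : frontier (s ∪ t) = frontier s ∪ frontier t := by
  have hs : Disjoint (closure s) (interior t) := h.mono_right (interior_subset.trans subset_closure)
  have ht : Disjoint (closure t) (interior s) :=
    h.symm.mono_right (interior_subset.trans subset_closure)
  rw [frontier, closure_union, interior_union_of_disjoint_closure h, union_sdiff_distrib,
    ← sdiff_sdiff, ← sdiff_sdiff_comm, hs.sdiff_eq_left, ← sdiff_sdiff, ht.sdiff_eq_left]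
  rfl

lemma le_infDist_frontier_of_ball_subset {X : Type*} [PseudoMetricSpace X] {s : Set X} {x : X}
    {r : ℝ} (hne : (frontier s).Nonempty) (h : ball x r ⊆ s) : r ≤ infDist x (frontier s) := by
  refine (le_infDist hne).2 fun y hy => not_lt.1 fun hxy => hy.2 ?_
  exact interior_maximal h isOpen_ball (mem_ball'.2 hxy)

section ShellCompl

variable {E : Type*} [NormedAddCommGroup E] {a b : ℝ}

/-- The complement of the closed spherical shell `{X | a ≤ ‖X‖ ≤ b}` centred at the origin, written
as the union of the ball it surrounds and its exterior; `pinched` is the planar case `a = 1`,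
`b = 2`. -/
def shellCompl (a b : ℝ) : Set E := ball 0 a ∪ (closedBall 0 b)ᶜ

lemma pinched_eq_shellCompl : pinched = shellCompl 1 2 := by
  ext X
  simp [pinched, shellCompl]

lemma isOpen_shellCompl : IsOpen (shellCompl a b : Set E) :=
  isOpen_ball.union isClosed_closedBall.isOpen_compl

lemma not_isPreconnected_shellCompl [NormedSpace ℝ E] [Nontrivial E] (ha : 0 < a) (hab : a ≤ b) :
    ¬ IsPreconnected (shellCompl a b : Set E) := by
  intro h
  obtain ⟨y, hy⟩ := NormedSpace.exists_lt_norm ℝ E b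
  have hdisj : Disjoint (ball (0 : E) a) (closedBall 0 b)ᶜ :=
    disjoint_compl_right_iff_subset.2 ((ball_subset_ball hab).trans ball_subset_closedBall)
  have hsub : shellCompl a b ⊆ ball (0 : E) a :=
    h.subset_left_of_subset_union isOpen_ball isClosed_closedBall.isOpen_compl hdisj subset_rfl
      ⟨0, Or.inl (mem_ball_self ha), mem_ball_self ha⟩
  have hya : ‖y‖ < a := mem_ball_zero_iff.1 (hsub (Or.inr (by simpa using hy)))
  linarith

lemma norm_eq_norm_of_dist_lt {x z : E} (hx : x ∈ sphere (0 : E) a ∪ sphere 0 b)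
    (hz : z ∈ sphere (0 : E) a ∪ sphere 0 b) (h : dist z x < b - a) : ‖z‖ = ‖x‖ := by
  have hxz := abs_lt.1 ((abs_norm_sub_norm_le z x).trans_lt (dist_eq_norm z x ▸ h))
  simp only [mem_union, mem_sphere_zero_iff_norm] at hx hz
  rcases hx with hx | hx <;> rcases hz with hz | hz <;> linarith

variable [NormedSpace ℝ E]

lemma closure_shellCompl (ha : 0 < a) (hab : a < b) :
    closure (shellCompl a b : Set E) = closedBall 0 a ∪ (ball 0 b)ᶜ := by
  rw [shellCompl, closure_union, closure_ball _ ha.ne', closure_compl,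
    interior_closedBall _ (ha.trans hab).ne']

lemma frontier_shellCompl (ha : 0 < a) (hab : a < b) :
    frontier (shellCompl a b : Set E) = sphere 0 a ∪ sphere 0 b := by
  have hb : b ≠ 0 := (ha.trans hab).ne'
  rw [shellCompl, frontier_union_of_disjoint_closure, frontier_ball _ ha.ne', frontier_compl,
    frontier_closedBall _ hb]
  rw [closure_ball _ ha.ne', closure_compl, interior_closedBall _ hb]
  exact disjoint_compl_right_iff_subset.2 (closedBall_subset_ball hab)

lemma mem_interior_compl_shellCompl (ha : 0 < a) (hab : a < b) {x : E} :
    x ∈ interior (shellCompl a b : Set E)ᶜ ↔ a < ‖x‖ ∧ ‖x‖ < b := by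
  simp [interior_compl, closure_shellCompl ha hab]

lemma frontier_interior_compl_shellCompl (ha : 0 < a) (hab : a < b) :
    frontier (interior (shellCompl a b : Set E)ᶜ) = sphere 0 a ∪ sphere 0 b := by
  rw [interior_compl, frontier_compl, closure_shellCompl ha hab,
    frontier_union_of_disjoint_closure, frontier_closedBall _ ha.ne', frontier_compl,
    frontier_ball _ (ha.trans hab).ne']
  rw [isClosed_closedBall.closure_eq, isOpen_ball.isClosed_compl.closure_eq]
  exact disjoint_compl_right_iff_subset.2 (closedBall_subset_ball hab)

end ShellCompl

lemma HarnackChain.isPreconnected {Ω : Set (Euc m)} (h : HarnackChain Ω) (hΩ : IsOpen Ω) :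
    IsPreconnected Ω := by
  rcases (frontier Ω).eq_empty_or_nonempty with hfr | hfr
  · rcases frontier_eq_empty_iff.1 hfr with rfl | rfl
    exacts [isPreconnected_empty, isPreconnected_univ]
  have hpos : ∀ X ∈ Ω, 0 < infDist X (frontier Ω) := fun X hX =>
    (isClosed_frontier.notMem_iff_infDist_pos hfr).1 fun hX' =>
      hX'.2 (hΩ.interior_eq.symm ▸ hX)
  obtain ⟨C, -, M, hM⟩ := h
  refine isPreconnected_of_forall_pair fun X hX X' hX' => ?_
  set ρ := min (infDist X (frontier Ω)) (infDist X' (frontier Ω))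
  have hρ : 0 < ρ := lt_min (hpos X hX) (hpos X' hX')
  have hdist : dist X X' < (1 + dist X X' / ρ) * ρ := by
    rw [add_mul, div_mul_cancel₀ _ hρ.ne']
    linarith
  obtain ⟨N, hN, -, ctr, rad, hfirst, hlast, hsub, hchain, -⟩ :=
    hM ρ hρ _ (le_add_of_nonneg_right (by positivity)) X hX X' hX' (min_le_left _ _)
      (min_le_right _ _) hdist
  refine ⟨⋃ k ∈ Iio N, ball (ctr k) (rad k), iUnion₂_subset hsub,
    mem_biUnion (mem_Iio.2 hN) hfirst, mem_biUnion (mem_Iio.2 (by lia)) hlast, ?_⟩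
  exact IsPreconnected.biUnion_of_chain ordConnected_Iio
    (fun k _ => (convex_ball _ _).isPreconnected) fun k _ hk => hchain k hk

section NonTangentialSegments

lemma eVariationOn_lineMap_Icc_le {E : Type*} [NormedAddCommGroup E] [NormedSpace ℝ E] (x y : E)
    {t : ℝ} (ht : 0 ≤ t) :
    eVariationOn (lineMap (k := ℝ) x y) (Icc 0 t) ≤ ENNReal.ofReal (t * dist x y) := by
  have hid : eVariationOn (id : ℝ → ℝ) (Icc 0 t) ≤ ENNReal.ofReal t := by
    simp
  calc eVariationOn (lineMap (k := ℝ) x y) (Icc 0 t)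
      ≤ nndist x y * eVariationOn (id : ℝ → ℝ) (Icc 0 t) :=
        (lipschitzWith_lineMap x y).lipschitzOnWith.comp_eVariationOn_le (mapsTo_univ _ _)
    _ ≤ nndist x y * ENNReal.ofReal t := by gcongr
    _ = ENNReal.ofReal (t * dist x y) := by
        rw [ENNReal.ofReal_mul ht, mul_comm, ← coe_nndist, ENNReal.ofReal_coe_nnreal]

lemma exists_mem_ball_lineMap_eq {E : Type*} [NormedAddCommGroup E] [NormedSpace ℝ E]
    {z Y w : E} {t s : ℝ} (ht : 0 < t) (hw : w ∈ ball (lineMap z Y t) (t * s)) :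
    ∃ y ∈ ball Y s, lineMap z y t = w := by
  refine ⟨lineMap z w t⁻¹, ?_, by simp [AffineMap.lineMap_apply, ht.ne']⟩
  have hsub : lineMap z w t⁻¹ - Y = t⁻¹ • (w - lineMap z Y t) := by
    simp only [AffineMap.lineMap_apply_module]
    match_scalars <;> field_simp
    ring
  have hdist : dist (lineMap z w t⁻¹) Y = t⁻¹ * dist w (lineMap z Y t) := by
    rw [dist_eq_norm, hsub, norm_smul_of_nonneg (inv_nonneg.2 ht.le), dist_eq_norm]
  rw [mem_ball, hdist, inv_mul_lt_iff₀ ht]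
  exact hw

variable {Ω : Set (Euc m)} {D R : ℝ}

lemma isNTPath_lineMap {z Y : Euc m} (hz : z ∈ closure Ω)
    (hΩ : ∀ t ∈ Ioc (0 : ℝ) 1, lineMap z Y t ∈ Ω)
    (hδ : ∀ t ∈ Ioc (0 : ℝ) 1, t * dist z Y ≤ D * infDist (lineMap z Y t) (frontier Ω)) :
    IsNTPath Ω D (lineMap (k := ℝ) z Y) := by
  refine ⟨⟨AffineMap.lineMap_continuous.continuousOn, fun t ht => ?_, hΩ⟩, fun t ht => ?_⟩
  · rcases ht.1.eq_or_lt with rfl | ht0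
    · simpa using hz
    · exact subset_closure (hΩ t ⟨ht0, ht.2⟩)
  · rcases ht.1.eq_or_lt with rfl | ht0
    · simp
    · exact (eVariationOn_lineMap_Icc_le z Y ht.1).trans
        (ENNReal.ofReal_le_ofReal (hδ t ⟨ht0, ht.2⟩))

/-- The cone over `ball Y (2 * r / D)` with apex `z` gives the segment from `z` to `Y` room
proportional to the length already travelled. -/
theorem localJohnWithin_of_lineMap_mem (hD : 2 ≤ D)
    (h : ∀ x ∈ frontier Ω, ∀ r, 0 < r → r < R → ∃ Y ∈ ball x r, ∀ z ∈ ball x r ∩ frontier Ω,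
      ∀ y ∈ ball Y (2 * r / D), ∀ t ∈ Ioc (0 : ℝ) 1, lineMap z y t ∈ Ω) :
    LocalJohnWithin Ω D R := by
  intro x hx r hr hrR
  obtain ⟨Y, hYx, hcone⟩ := h x hx r hr hrR
  have : 0 < D := two_pos.trans_le hD
  have hballY : ball Y (2 * r / D) ⊆ Ω := fun y hy => by
    simpa using hcone x ⟨mem_ball_self hr, hx⟩ y hy 1 (by simp)
  have hYmem : Y ∈ Ω := hballY (mem_ball_self (by positivity))
  refine ⟨Y, ⟨hYx, hYmem⟩, (ball_subset_ball (by gcongr; linarith)).trans hballY, ?_⟩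
  rintro z hz
  have hzY : dist z Y ≤ 2 * r := by
    linarith [dist_triangle_right z Y x, mem_ball.1 hz.1, mem_ball.1 hYx]
  refine ⟨lineMap z Y, isNTPath_lineMap (frontier_subset_closure hz.2)
    (hcone z hz Y (mem_ball_self (by positivity))) fun t ht => ?_, by simp, by simp, ?_⟩
  · have hball : ball (lineMap z Y t) (t * (2 * r / D)) ⊆ Ω := fun w hw => by
      obtain ⟨y, hy, rfl⟩ := exists_mem_ball_lineMap_eq ht.1 hw
      exact hcone z hz y hy t ht
    calc t * dist z Y ≤ t * (2 * r) := mul_le_mul_of_nonneg_left hzY ht.1.le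
      _ = D * (t * (2 * r / D)) := by field_simp
      _ ≤ D * infDist (lineMap z Y t) (frontier Ω) := by
        gcongr
        exact le_infDist_frontier_of_ball_subset ⟨x, hx⟩ hball
  · refine (eVariationOn_lineMap_Icc_le z Y zero_le_one).trans (ENNReal.ofReal_le_ofReal ?_)
    nlinarith

end NonTangentialSegments

lemma norm_lineMap_lt_norm {E : Type*} [NormedAddCommGroup E] [NormedSpace ℝ E] {z y : E} {t : ℝ}
    (h : ‖y‖ < ‖z‖) (ht : t ∈ Ioc (0 : ℝ) 1) : ‖lineMap z y t‖ < ‖z‖ := by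
  calc ‖lineMap z y t‖ = ‖(1 - t) • z + t • y‖ := by rw [AffineMap.lineMap_apply_module]
    _ ≤ (1 - t) * ‖z‖ + t * ‖y‖ := by
        refine (norm_add_le _ _).trans_eq ?_
        rw [norm_smul_of_nonneg (sub_nonneg.2 ht.2), norm_smul_of_nonneg ht.1.le]
    _ < (1 - t) * ‖z‖ + t * ‖z‖ := by gcongr; exact ht.1
    _ = ‖z‖ := by ring

lemma norm_lt_norm_lineMap {E : Type*} [NormedAddCommGroup E] [InnerProductSpace ℝ E] {z y : E}
    {t : ℝ} (h : ‖z‖ ^ 2 < ⟪z, y⟫) (ht : 0 < t) : ‖z‖ < ‖lineMap z y t‖ := by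
  have hinner : ⟪z, lineMap z y t⟫ = ‖z‖ ^ 2 + t * (⟪z, y⟫ - ‖z‖ ^ 2) := by
    rw [AffineMap.lineMap_apply_module, inner_add_right, real_inner_smul_right,
      real_inner_smul_right, real_inner_self_eq_norm_sq]
    ring
  refine lt_of_mul_lt_mul_left ?_ (norm_nonneg z)
  calc ‖z‖ * ‖z‖ < ‖z‖ ^ 2 + t * (⟪z, y⟫ - ‖z‖ ^ 2) := by nlinarith
    _ ≤ ‖z‖ * ‖lineMap z y t‖ := hinner ▸ real_inner_le_norm _ _

/-- The point at signed radial distance `s` from `x`, outwards for `s > 0`, where a John point for a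
ball centred at `x` is placed; its value at `x = 0` is `0`. -/
def radialShift {E : Type*} [NormedAddCommGroup E] [NormedSpace ℝ E] (s : ℝ) (x : E) : E :=
  (1 + s / ‖x‖) • x

section NormedSpace

variable {E : Type*} [NormedAddCommGroup E] [NormedSpace ℝ E] {x y : E} {r s : ℝ}

lemma norm_radialShift (hx : x ≠ 0) (hs : 0 ≤ ‖x‖ + s) : ‖radialShift s x‖ = ‖x‖ + s := by
  have hx' : 0 < ‖x‖ := norm_pos_iff.2 hx
  have hcoeff : 1 + s / ‖x‖ = (‖x‖ + s) / ‖x‖ := by field_simp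
  rw [radialShift, hcoeff, norm_smul_of_nonneg (by positivity), div_mul_cancel₀ _ hx'.ne']

lemma dist_radialShift_self (hx : x ≠ 0) : dist (radialShift s x) x = |s| := by
  have hsub : radialShift s x - x = (s / ‖x‖) • x := by
    rw [radialShift]
    module
  rw [dist_eq_norm, hsub, norm_smul, norm_div, norm_norm, div_mul_cancel₀ _ (norm_ne_zero_iff.2 hx),
    Real.norm_eq_abs]

lemma norm_lt_norm_of_mem_ball_radialShift (hr : 0 < r) (hrx : r ≤ ‖x‖)
    (hy : y ∈ ball (radialShift (-(r / 2)) x) (r / 8)) : ‖y‖ < ‖x‖ := by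
  have hx : x ≠ 0 := norm_pos_iff.1 (hr.trans_le hrx)
  have hnorm := norm_radialShift (s := -(r / 2)) hx (by linarith)
  have hdiff := (norm_sub_norm_le y _).trans_lt (mem_ball_iff_norm.1 hy)
  linarith

end NormedSpace

/-- The sphere stays within `r ^ 2 / (2 * ‖x‖)` of its tangent plane at `z` in a ball of radius `r`,
which the outward shift by `r / 2` outweighs. -/
lemma norm_sq_lt_inner_of_mem_ball_radialShift {E : Type*} [NormedAddCommGroup E]
    [InnerProductSpace ℝ E] {x y z : E} {r : ℝ} (hrx : 2 * r ≤ ‖x‖) (hz : ‖z‖ = ‖x‖)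
    (hzx : dist z x < r) (hy : y ∈ ball (radialShift (r / 2) x) (r / 8)) :
    ‖z‖ ^ 2 < ⟪z, y⟫ := by
  have hr : 0 < r := dist_nonneg.trans_lt hzx
  have hx : 0 < ‖x‖ := by linarith
  have hinner : ⟪z, x⟫ = ‖x‖ ^ 2 - dist z x ^ 2 / 2 := by
    rw [dist_eq_norm, norm_sub_sq_real, hz]
    ring
  have hshift : ‖x‖ ^ 2 + 3 / 16 * r * ‖x‖ ≤ ⟪z, radialShift (r / 2) x⟫ := by
    have hq : r / 2 / ‖x‖ ≤ 1 / 4 := by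
      rw [div_le_iff₀ hx]
      linarith
    have hsq : (1 + r / 2 / ‖x‖) * dist z x ^ 2 ≤ 5 / 4 * (r * (‖x‖ / 2)) := by
      gcongr
      · linarith
      · nlinarith [dist_nonneg (x := z) (y := x)]
    calc ‖x‖ ^ 2 + 3 / 16 * r * ‖x‖ = ‖x‖ ^ 2 + r / 2 * ‖x‖ - 5 / 4 * (r * (‖x‖ / 2)) / 2 := by ring
      _ ≤ ‖x‖ ^ 2 + r / 2 * ‖x‖ - (1 + r / 2 / ‖x‖) * dist z x ^ 2 / 2 := by gcongr
      _ = (1 + r / 2 / ‖x‖) * ⟪z, x⟫ := by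
        rw [hinner]
        field_simp
      _ = ⟪z, radialShift (r / 2) x⟫ := by rw [radialShift, real_inner_smul_right]
  have hdiff : -(‖x‖ * (r / 8)) ≤ ⟪z, y - radialShift (r / 2) x⟫ := by
    refine neg_le_of_abs_le ((abs_real_inner_le_norm _ _).trans ?_)
    rw [hz]
    gcongr
    exact (mem_ball_iff_norm.1 hy).le
  rw [inner_sub_right] at hdiff
  rw [hz]
  nlinarith [mul_pos hr hx]

theorem localJohnWithin_of_frontier_locally_sphere {Ω : Set (Euc m)} {R : ℝ}
    (hR : ∀ x ∈ frontier Ω, 2 * R ≤ ‖x‖)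
    (hsphere : ∀ x ∈ frontier Ω, ∀ z ∈ frontier Ω, dist z x < R → ‖z‖ = ‖x‖)
    (hside : ∀ x ∈ frontier Ω, (∀ w ∈ ball x R, ‖w‖ < ‖x‖ → w ∈ Ω) ∨
      ∀ w ∈ ball x R, ‖x‖ < ‖w‖ → w ∈ Ω) :
    LocalJohnWithin Ω 16 R := by
  refine localJohnWithin_of_lineMap_mem (by norm_num) fun x hx r hr hrR => ?_
  have hrx : 2 * r < ‖x‖ := by linarith [hR x hx]
  have hx0 : x ≠ 0 := norm_pos_iff.1 (by linarith)
  have hradius : 2 * r / 16 = r / 8 := by ring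
  have hball : ∀ {s}, |s| = r / 2 → ball (radialShift s x) (2 * r / 16) ⊆ ball x r := fun hs =>
    ball_subset_ball' (by rw [dist_radialShift_self hx0, hs]; linarith)
  have hsegment : ∀ {s}, |s| = r / 2 → ∀ z ∈ ball x r, ∀ y ∈ ball (radialShift s x) (2 * r / 16),
      ∀ t ∈ Ioc (0 : ℝ) 1, lineMap z y t ∈ ball x R := fun hs z hz y hy t ht =>
    ball_subset_ball hrR.le ((convex_ball x r).lineMap_mem hz (hball hs hy) ⟨ht.1.le, ht.2⟩)
  have hcentre : ∀ {s}, |s| = r / 2 → radialShift s x ∈ ball x r := fun hs =>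
    hball hs (mem_ball_self (by positivity))
  rcases hside x hx with hin | hout
  · have hs : |-(r / 2)| = r / 2 := by rw [abs_neg, abs_of_pos (half_pos hr)]
    refine ⟨_, hcentre hs, fun z hz y hy t ht => hin _ (hsegment hs z hz.1 y hy t ht) ?_⟩
    have hzx : ‖z‖ = ‖x‖ := hsphere x hx z hz.2 (hz.1.trans hrR)
    rw [← hzx]
    refine norm_lineMap_lt_norm ?_ ht
    rw [hzx]
    exact norm_lt_norm_of_mem_ball_radialShift hr (by linarith) (hradius ▸ hy)
  · have hs : |r / 2| = r / 2 := abs_of_pos (half_pos hr)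
    refine ⟨_, hcentre hs, fun z hz y hy t ht => hout _ (hsegment hs z hz.1 y hy t ht) ?_⟩
    have hzx : ‖z‖ = ‖x‖ := hsphere x hx z hz.2 (hz.1.trans hrR)
    rw [← hzx]
    exact norm_lt_norm_lineMap
      (norm_sq_lt_inner_of_mem_ball_radialShift hrx.le hzx hz.1 (hradius ▸ hy)) ht.1

section ShellJohn

variable {a b R : ℝ}

lemma localJohnWithin_shellCompl (ha : 0 < a) (hab : a < b) (hRa : 2 * R ≤ a) (hRb : R ≤ b - a) :
    LocalJohnWithin (shellCompl a b : Set (Euc m)) 16 R := by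
  refine localJohnWithin_of_frontier_locally_sphere ?_ ?_ ?_ <;>
    simp only [frontier_shellCompl ha hab]
  · rintro x (hx | hx) <;> linarith [mem_sphere_zero_iff_norm.1 hx]
  · exact fun x hx z hz hzx => norm_eq_norm_of_dist_lt hx hz (hzx.trans_le hRb)
  · rintro x (hx | hx) <;> rw [mem_sphere_zero_iff_norm.1 hx]
    · exact Or.inl fun w _ hw => Or.inl (mem_ball_zero_iff.2 hw)
    · exact Or.inr fun w _ hw => Or.inr (by simpa using hw)

lemma localJohnWithin_interior_compl_shellCompl (ha : 0 < a) (hab : a < b) (hRa : 2 * R ≤ a)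
    (hRb : R ≤ b - a) : LocalJohnWithin (interior (shellCompl a b : Set (Euc m))ᶜ) 16 R := by
  refine localJohnWithin_of_frontier_locally_sphere ?_ ?_ ?_ <;>
    simp only [frontier_interior_compl_shellCompl ha hab, mem_interior_compl_shellCompl ha hab]
  · rintro x (hx | hx) <;> linarith [mem_sphere_zero_iff_norm.1 hx]
  · exact fun x hx z hz hzx => norm_eq_norm_of_dist_lt hx hz (hzx.trans_le hRb)
  · have hnorm : ∀ x : Euc m, ∀ w ∈ ball x R, |‖w‖ - ‖x‖| < R := fun x w hw =>
      (abs_norm_sub_norm_le w x).trans_lt (mem_ball_iff_norm.1 hw)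
    rintro x (hx | hx) <;> have hx := mem_sphere_zero_iff_norm.1 hx
    · exact Or.inr fun w hw hxw => ⟨hx ▸ hxw, by linarith [(abs_lt.1 (hnorm x w hw)).2]⟩
    · exact Or.inl fun w hw hxw => ⟨by linarith [(abs_lt.1 (hnorm x w hw)).1], hx ▸ hxw⟩

end ShellJohn

lemma ofReal_le_hausdorffMeasure_ball_inter_of_isPreconnected {X : Type*} [MetricSpace X]
    [MeasurableSpace X] [BorelSpace X] {s : Set X} (hs : IsPreconnected s) {x y : X} {r : ℝ}
    (hx : x ∈ s) (hy : y ∈ s) (hr : r ≤ dist x y) :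
    ENNReal.ofReal r ≤ μH[1] (ball x r ∩ s) := by
  have hlip : LipschitzWith 1 fun z => dist z x := LipschitzWith.dist_left x
  have hIco : Ico 0 r ⊆ (fun z => dist z x) '' (ball x r ∩ s) := by
    intro t ht
    have hmem : t ∈ (fun z => dist z x) '' s :=
      (hs.image _ hlip.continuous.continuousOn).ordConnected.out
        (mem_image_of_mem _ hx) (mem_image_of_mem _ hy)
        ⟨by simpa using ht.1, by simpa [dist_comm y x] using ht.2.le.trans hr⟩
    obtain ⟨z, hz, rfl⟩ := hmem
    exact ⟨z, ⟨ht.2, hz⟩, rfl⟩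
  calc ENNReal.ofReal r = μH[1] (Ico 0 r) := by
        rw [hausdorffMeasure_real, Real.volume_Ico, sub_zero]
    _ ≤ μH[1] ((fun z => dist z x) '' (ball x r ∩ s)) := measure_mono hIco
    _ ≤ μH[1] (ball x r ∩ s) := by
        simpa using hlip.hausdorffMeasure_image_le zero_le_one (ball x r ∩ s)

lemma ofReal_le_hausdorffMeasure_ball_inter_sphere {E : Type*} [NormedAddCommGroup E]
    [NormedSpace ℝ E] [MeasurableSpace E] [BorelSpace E] (hE : 1 < Module.rank ℝ E) {x : E} {r : ℝ}
    (hr : r ≤ 2 * ‖x‖) : ENNReal.ofReal r ≤ μH[1] (ball x r ∩ sphere 0 ‖x‖) := by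
  refine ofReal_le_hausdorffMeasure_ball_inter_of_isPreconnected (y := -x)
    (isPreconnected_sphere hE 0 ‖x‖) (by simp) (by simp) ?_
  rwa [dist_eq_norm, sub_neg_eq_add, ← two_smul ℝ x, norm_smul_of_nonneg zero_le_two]

lemma ball_inter_sphere_subset_image_circleMap {ρ r : ℝ} (hρ : 0 < ρ) {y : ℂ} (hy : ‖y‖ = ρ) :
    ball y r ∩ sphere 0 ρ ⊆ circleMap 0 ρ '' closedBall y.arg (π / 2 * (r / ρ)) := by
  rintro w ⟨hwy, hw⟩
  have hw : ‖w‖ = ρ := mem_sphere_zero_iff_norm.1 hw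
  have hy0 : y ≠ 0 := norm_pos_iff.1 (hy ▸ hρ)
  have hnorm : ‖w / y‖ = 1 := by rw [norm_div, hw, hy, div_self hρ.ne']
  have harg : |(w / y).arg| ≤ π / 2 * (r / ρ) :=
    calc |(w / y).arg| = InnerProductGeometry.angle (w / y) 1 :=
          (Complex.angle_one_right (norm_ne_zero_iff.1 (hnorm ▸ one_ne_zero))).symm
      _ ≤ π / 2 * ‖w / y - 1‖ := Complex.angle_le_mul_norm_sub hnorm norm_one
      _ ≤ π / 2 * (r / ρ) := by
          rw [div_sub_one hy0, norm_div, hy]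
          gcongr
          exact (mem_ball_iff_norm.1 hwy).le
  refine ⟨y.arg + (w / y).arg, by simpa [Real.dist_eq] using harg, ?_⟩
  have hwy' := Complex.norm_mul_exp_arg_mul_I (w / y)
  rw [hnorm, Complex.ofReal_one, one_mul] at hwy'
  rw [circleMap_zero, Complex.ofReal_add, add_mul, Complex.exp_add, ← mul_assoc, ← hy,
    Complex.norm_mul_exp_arg_mul_I, hwy', mul_div_cancel₀ _ hy0]

lemma hausdorffMeasure_ball_inter_sphere_le {F : Type*} [NormedAddCommGroup F]
    [InnerProductSpace ℝ F] [MeasurableSpace F] [BorelSpace F] (hF : Module.finrank ℝ F = 2) (x : F)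
    (r : ℝ) {ρ : ℝ} (hρ : 0 < ρ) :
    μH[1] (ball x r ∩ sphere 0 ρ) ≤ ENNReal.ofReal (2 * π * r) := by
  have : FiniteDimensional ℝ F := .of_finrank_pos (by lia)
  let e : ℂ ≃ₗᵢ[ℝ] F :=
    Complex.isometryOfOrthonormal ((stdOrthonormalBasis ℝ F).reindex (finCongr hF))
  rw [← e.toIsometryEquiv.hausdorffMeasure_preimage]
  rcases (e ⁻¹' (ball x r ∩ sphere 0 ρ)).eq_empty_or_nonempty with hempty | ⟨y, hyx, hy⟩
  · exact hempty ▸ measure_empty.trans_le zero_le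
  have hy : ‖y‖ = ρ := by simpa using hy
  have hsub : e ⁻¹' (ball x r ∩ sphere 0 ρ) ⊆
      circleMap 0 ρ '' closedBall y.arg (π / 2 * (2 * r / ρ)) := by
    refine fun w hw => ball_inter_sphere_subset_image_circleMap hρ hy ⟨?_, by simpa using hw.2⟩
    rw [mem_ball, ← e.dist_map]
    linarith [dist_triangle_right (e w) (e y) x, mem_ball.1 hw.1, mem_ball.1 hyx]
  calc μH[1] (e ⁻¹' (ball x r ∩ sphere 0 ρ))
      ≤ μH[1] (circleMap 0 ρ '' closedBall y.arg (π / 2 * (2 * r / ρ))) := measure_mono hsub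
    _ ≤ Real.nnabs ρ * μH[1] (closedBall y.arg (π / 2 * (2 * r / ρ))) := by
        simpa only [NNReal.coe_one, ENNReal.rpow_one] using
          (lipschitzWith_circleMap 0 ρ).hausdorffMeasure_image_le zero_le_one _
    _ = ENNReal.ofReal (2 * π * r) := by
        rw [hausdorffMeasure_real, Real.volume_closedBall, Real.nnabs_of_nonneg hρ.le,
          ← ENNReal.ofReal, ← ENNReal.ofReal_mul hρ.le]
        congr 1
        field_simp

lemma ediam_sphere_union_sphere_le {E : Type*} [SeminormedAddCommGroup E] {a b : ℝ} (ha : 0 ≤ a)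
    (hab : a ≤ b) : ediam (sphere (0 : E) a ∪ sphere 0 b) ≤ ENNReal.ofReal (2 * b) := by
  have hsub : sphere (0 : E) a ∪ sphere 0 b ⊆ closedEBall 0 (ENNReal.ofReal b) := by
    rw [closedEBall_ofReal (ha.trans hab)]
    exact union_subset (sphere_subset_closedBall.trans (closedBall_subset_closedBall hab))
      sphere_subset_closedBall
  rw [ENNReal.ofReal_mul zero_le_two, ENNReal.ofReal_ofNat]
  exact (ediam_mono hsub).trans ediam_closedEBall_le

theorem isADR_sphere_union_sphere {a b : ℝ} (ha : 0 < a) (hab : a ≤ b) :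
    IsADR 1 (sphere (0 : Euc 2) a ∪ sphere 0 b) := by
  have hb : 0 < b := ha.trans_le hab
  refine ⟨isClosed_sphere.union isClosed_sphere, max (4 * π) (b / a),
    le_max_of_le_right ((one_le_div ha).2 hab), fun x hx r hr hrdiam => ?_⟩
  rw [Real.rpow_one]
  constructor
  · have hr2b : r < 2 * b := (ENNReal.ofReal_lt_ofReal_iff (by positivity)).1
      (hrdiam.trans_le (ediam_sphere_union_sphere_le ha.le hab))
    have hxa : a ≤ ‖x‖ := by rcases hx with hx | hx <;> simp_all
    have hsphere : sphere (0 : Euc 2) ‖x‖ ⊆ sphere 0 a ∪ sphere 0 b := by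
      rcases hx with hx | hx <;> rw [mem_sphere_zero_iff_norm.1 hx]
      exacts [subset_union_left, subset_union_right]
    have hscale : a / b * r ≤ r := mul_le_of_le_one_left hr.le ((div_le_one hb).2 hab)
    have hscale2 : a / b * r ≤ 2 * ‖x‖ := by
      calc a / b * r ≤ a / b * (2 * b) := by gcongr
        _ = 2 * a := by field_simp
        _ ≤ 2 * ‖x‖ := by gcongr
    calc ENNReal.ofReal (r / max (4 * π) (b / a)) ≤ ENNReal.ofReal (r / (b / a)) := by
          gcongr
          exact le_max_right _ _
      _ = ENNReal.ofReal (a / b * r) := by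
          congr 1
          field_simp
      _ ≤ μH[1] (ball x (a / b * r) ∩ sphere 0 ‖x‖) :=
          ofReal_le_hausdorffMeasure_ball_inter_sphere (by simp [← Module.finrank_eq_rank]) hscale2
      _ ≤ μH[1] (ball x r ∩ (sphere 0 a ∪ sphere 0 b)) := by gcongr
  · calc μH[1] (ball x r ∩ (sphere 0 a ∪ sphere 0 b))
        ≤ μH[1] (ball x r ∩ sphere 0 a) + μH[1] (ball x r ∩ sphere 0 b) := by
          rw [inter_union_distrib_left]
          exact measure_union_le _ _
      _ ≤ ENNReal.ofReal (2 * π * r) + ENNReal.ofReal (2 * π * r) := by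
          gcongr <;> exact hausdorffMeasure_ball_inter_sphere_le (by simp) x r ‹_›
      _ = ENNReal.ofReal (4 * π * r) := by
          rw [← ENNReal.ofReal_add (by positivity) (by positivity)]
          ring_nf
      _ ≤ ENNReal.ofReal (max (4 * π) (b / a) * r) := by
          gcongr
          exact le_max_left _ _

theorem pinched_localJohn_small_scales_not_harnack_general {a b R : ℝ} (ha : 0 < a) (hab : a < b)
    (hRa : 2 * R ≤ a) (hRb : R ≤ b - a) :
    IsADR 1 (frontier (shellCompl a b : Set (Euc 2))) ∧
    (∃ D₀ : ℝ, 1 ≤ D₀ ∧ LocalJohnWithin (shellCompl a b : Set (Euc 2)) D₀ R ∧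
      LocalJohnWithin (interior (shellCompl a b : Set (Euc 2))ᶜ) D₀ R) ∧
    ¬ HarnackChain (shellCompl a b : Set (Euc 2)) ∧ ¬ IsConnected (shellCompl a b : Set (Euc 2)) ∧
    ¬ IsCAD 1 (shellCompl a b : Set (Euc 2)) := by
  have hconn : ¬ IsPreconnected (shellCompl a b : Set (Euc 2)) :=
    not_isPreconnected_shellCompl ha hab.le
  refine ⟨?_, ⟨16, by norm_num, localJohnWithin_shellCompl ha hab hRa hRb,
    localJohnWithin_interior_compl_shellCompl ha hab hRa hRb⟩,
    fun h => hconn (h.isPreconnected isOpen_shellCompl), fun h => hconn h.isPreconnected,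
    fun h => hconn h.1.2.1.isPreconnected⟩
  rw [frontier_shellCompl ha hab]
  exact isADR_sphere_union_sphere ha hab.le

/-- **Example 3.5.** `Ω := B(0,1) ∪ {|X| > 2}` has `1`-ADR boundary and satisfies the 2-sided
local `(D₀, 1/2)`-John condition for some `D₀ ≥ 1`, yet it does not satisfy the Harnack chain
condition (it is not even connected), so it is not a chord-arc domain. -/
theorem pinched_localJohn_small_scales_not_harnack :
    IsADR 1 (frontier pinched) ∧
    (∃ D₀ : ℝ, 1 ≤ D₀ ∧ LocalJohnWithin pinched D₀ (1 / 2) ∧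
      LocalJohnWithin (interior pinchedᶜ) D₀ (1 / 2)) ∧
    ¬ HarnackChain pinched ∧ ¬ IsConnected pinched ∧ ¬ IsCAD 1 pinched := by
  rw [pinched_eq_shellCompl]
  exact pinched_localJohn_small_scales_not_harnack_general one_pos one_lt_two (by norm_num)
    (by norm_num)

end
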